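/- arXiv:math/0312030 — 4 statements merged into one kernel-verified Lean document; each statement's English description precedes it below -/
import Mathlib

section
/- Let n, p ≥ 1 and let G be a finite subgroup of GL(n, ℂ). Let F : ℂ[u₁,…,uₙ] → ℂ[[X₁,…,X_p]] be a ℂ-algebra homomorphism such that F(σ) = 0 for every G-invariant polynomial σ whose constant coefficient is zero. Then F(uᵢ) = 0 for every i = 1,…,n; equivalently, F sends every polynomial with zero constant coefficient to 0. -/
/-!
On an invariant polynomial `σ`, the homomorphism `F` agrees with `σ ↦ σ(0)`, since `σ - σ(0)` is
invariant with zero constant coefficient. The coordinate function `uᵢ` is a root of the monic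
polynomial `Q(T) = ∏_{g ∈ G} (T - g • uᵢ)`, whose coefficients are invariant. As every `g • uᵢ`
vanishes at the origin, applying `F` to the coefficients of `Q` gives `T ^ |G|`, so
`F(uᵢ) ^ |G| = 0`, and `F(uᵢ) = 0` because the power series ring is a domain.
-/

open MvPolynomial

/-- The action of `g ∈ GL(n, ℂ)` on polynomials by linear substitution:
`(g • P)(v) = P(g⁻¹ · v)`. -/
noncomputable def glAct {n : ℕ} (g : GL (Fin n) ℂ) :
    MvPolynomial (Fin n) ℂ →ₐ[ℂ] MvPolynomial (Fin n) ℂ :=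
  aeval fun i => ∑ j, C ((↑(g⁻¹) : Matrix (Fin n) (Fin n) ℂ) i j) * X j

theorem glAct_mul {n : ℕ} (g h : GL (Fin n) ℂ) :
    glAct (g * h) = (glAct g).comp (glAct h) := by
  ext1 i
  simp only [glAct, AlgHom.comp_apply, aeval_X, map_sum, map_mul, algHom_C, mul_inv_rev,
    Units.val_mul, Matrix.mul_apply, Finset.sum_mul, Finset.mul_sum, algebraMap_eq]
  rw [Finset.sum_comm]
  simp only [mul_assoc]

theorem constantCoeff_glAct_X {n : ℕ} (g : GL (Fin n) ℂ) (i : Fin n) :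
    constantCoeff (glAct g (X i)) = 0 := by
  simp [glAct]

/-- The polynomial `∏_{g ∈ G} (T - g • P)`; it has `G`-invariant coefficients. -/
noncomputable def orbitPoly {n : ℕ} (G : Subgroup (GL (Fin n) ℂ)) [Fintype G]
    (P : MvPolynomial (Fin n) ℂ) : Polynomial (MvPolynomial (Fin n) ℂ) :=
  ∏ g : G, (Polynomial.X - Polynomial.C (glAct (g : GL (Fin n) ℂ) P))

theorem orbitPoly_map_glAct {n : ℕ} (G : Subgroup (GL (Fin n) ℂ)) [Fintype G]
    (P : MvPolynomial (Fin n) ℂ) (h : G) :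
    (orbitPoly G P).map (glAct (h : GL (Fin n) ℂ)).toRingHom = orbitPoly G P := by
  rw [orbitPoly, Polynomial.map_prod]
  refine Fintype.prod_equiv (Equiv.mulLeft h) _ _ fun g => ?_
  simp [glAct_mul]

theorem orbitPoly_eval_self {n : ℕ} (G : Subgroup (GL (Fin n) ℂ)) [Fintype G]
    (P : MvPolynomial (Fin n) ℂ) : (orbitPoly G P).eval P = 0 := by
  rw [orbitPoly, Polynomial.eval_prod]
  refine Finset.prod_eq_zero (Finset.mem_univ 1) ?_
  have h1 : glAct (1 : GL (Fin n) ℂ) = AlgHom.id ℂ _ := by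
    ext1 i
    simp [glAct, Matrix.one_apply]
  simp [h1]

theorem stmt0 (n p : ℕ) (hn : 1 ≤ n) (hp : 1 ≤ p)
    (G : Subgroup (GL (Fin n) ℂ)) (hGfin : (G : Set (GL (Fin n) ℂ)).Finite)
    (F : MvPolynomial (Fin n) ℂ →ₐ[ℂ] MvPowerSeries (Fin p) ℂ)
    (hF : ∀ σ : MvPolynomial (Fin n) ℂ,
      (∀ g ∈ G, glAct g σ = σ) → coeff 0 σ = 0 → F σ = 0) :
    (∀ i : Fin n, F (X i) = 0) ∧
    (∀ P : MvPolynomial (Fin n) ℂ, coeff 0 P = 0 → F P = 0) := by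
  have hX : ∀ i : Fin n, F (X i) = 0 := by
    intro i
    have : Fintype G := hGfin.fintype
    have hinv : ∀ σ : MvPolynomial (Fin n) ℂ, (∀ g ∈ G, glAct g σ = σ) →
        F σ = algebraMap ℂ _ (constantCoeff σ) := by
      intro σ hσ
      have h := hF (σ - algebraMap ℂ _ (constantCoeff σ))
        (fun g hg => by rw [map_sub, hσ g hg, AlgHom.commutes])
        (by simp [← constantCoeff_eq])
      rwa [map_sub, AlgHom.commutes, sub_eq_zero] at h
    have hmap : (orbitPoly G (X i)).map F.toRingHom =
        (orbitPoly G (X i)).map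
          ((algebraMap ℂ (MvPowerSeries (Fin p) ℂ)).comp constantCoeff) := by
      ext1 k
      rw [Polynomial.coeff_map, Polynomial.coeff_map]
      refine hinv _ fun g hg => ?_
      have h := congrArg (fun q => Polynomial.coeff q k)
        (orbitPoly_map_glAct G (X i) ⟨g, hg⟩)
      simp only [Polynomial.coeff_map] at h
      exact h
    have hpow : (orbitPoly G (X i)).map
        ((algebraMap ℂ (MvPowerSeries (Fin p) ℂ)).comp constantCoeff) =
          Polynomial.X ^ Fintype.card G := by
      simp [orbitPoly, Polynomial.map_prod, constantCoeff_glAct_X]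
    have hroot : ((orbitPoly G (X i)).map F.toRingHom).eval (F (X i)) = 0 := by
      have h := Polynomial.eval_map_apply (p := orbitPoly G (X i)) F.toRingHom (X i)
      rw [orbitPoly_eval_self, map_zero] at h
      exact h
    rw [hmap, hpow, Polynomial.eval_pow, Polynomial.eval_X] at hroot
    exact eq_zero_of_pow_eq_zero hroot
  refine ⟨hX, fun P hP => ?_⟩
  have hFeq : F = aeval (0 : Fin n → MvPowerSeries (Fin p) ℂ) := by
    ext1 i
    simp [hX]
  rw [hFeq, aeval_zero, constantCoeff_eq, hP, map_zero]
end

section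
/- Let n ≥ 1 and let y₁,…,yₙ ∈ ℂ[u₁,…,uₙ] be polynomials whose Jacobian matrix M, with entries M_{i,a} = ∂yᵢ/∂u_a, has nonzero determinant J := det M. In the fraction field ℂ(u₁,…,uₙ) of ℂ[u₁,…,uₙ], for i = 1,…,n define the derivation D_i := J⁻¹ · Σ_{a=1}^n (adj M)_{a,i} · ∂/∂u_a, where adj M denotes the adjugate matrix of M and ∂/∂u_a is the canonical extension of the formal partial derivative to the fraction field. Then for every s ≥ 1, all indices i₁,…,i_s ∈ {1,…,n}, and every a ∈ {1,…,n}, the element J^{2s−1} · (D_{i₁} ∘ ⋯ ∘ D_{i_s})(u_a) of ℂ(u₁,…,uₙ) lies in the image of the polynomial ring ℂ[u₁,…,uₙ], i.e., it is a polynomial. -/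
/-!
If `J ^ k * x` is a polynomial `P`, the Leibniz rule gives
`J ^ (k + 1) * ∂x = J * ∂P - k * P * ∂J`, a polynomial; since the derivations `D_i` carry one
further factor `J⁻¹` in front of polynomial combinations of the `∂/∂u_a`, each application of a
`D_i` raises the exponent of `J` by at most two. The first application, to the polynomial `u_a`,
raises it by only one, whence the exponent `2 * s - 1`.
-/

open MvPolynomial

/-- One differentiation costs one power of `J`: here `φ` plays the role of the embedding of the
polynomial ring, `d` that of `∂/∂u_a`, and `δ` its extension to the fraction field. -/
theorem pow_succ_mul_derivation_mem_range {R K : Type*} [CommRing R] [CommRing K] [Algebra ℂ K]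
    (φ : R →+* K) (δ : Derivation ℂ K K) (d : R → R) (h : ∀ P, δ (φ P) = φ (d P))
    (J : R) (k : ℕ) (x : K) (hx : φ J ^ k * x ∈ φ.range) :
    φ J ^ (k + 1) * δ x ∈ φ.range := by
  obtain ⟨P, hP⟩ := hx
  refine ⟨J * d P - k * P * d J, ?_⟩
  have h1 : φ (d P) = φ J ^ k * δ x + x * (k * φ J ^ (k - 1) * φ (d J)) := by
    rw [← h, hP, Derivation.leibniz, Derivation.leibniz_pow, h]
    simp only [smul_eq_mul, nsmul_eq_mul]
    ring
  -- For `k = 0` the truncated exponent `k - 1` is harmless because of the factor `k`.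
  have h2 : (k : K) * φ J ^ (k - 1) * φ J = k * φ J ^ k := by
    cases k with
    | zero => simp
    | succ m => simp [pow_succ, mul_assoc]
  simp only [map_sub, map_mul, map_natCast]
  rw [h1, hP]
  linear_combination x * φ (d J) * h2

theorem stmt3 (n : ℕ) (hn : 1 ≤ n)
    (y : Fin n → MvPolynomial (Fin n) ℂ)
    (M : Matrix (Fin n) (Fin n) (MvPolynomial (Fin n) ℂ))
    (hM : M = Matrix.of fun i a => pderiv a (y i))
    (hJ : M.det ≠ 0)
    (D : Fin n → Derivation ℂ (FractionRing (MvPolynomial (Fin n) ℂ))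
      (FractionRing (MvPolynomial (Fin n) ℂ)))
    (hD : ∀ (a : Fin n) (P : MvPolynomial (Fin n) ℂ),
      D a (algebraMap (MvPolynomial (Fin n) ℂ) (FractionRing (MvPolynomial (Fin n) ℂ)) P)
        = algebraMap (MvPolynomial (Fin n) ℂ) (FractionRing (MvPolynomial (Fin n) ℂ))
            (pderiv a P))
    (Dy : Fin n → FractionRing (MvPolynomial (Fin n) ℂ) → FractionRing (MvPolynomial (Fin n) ℂ))
    (hDy : ∀ i x, Dy i x =
      (algebraMap (MvPolynomial (Fin n) ℂ) (FractionRing (MvPolynomial (Fin n) ℂ)) M.det)⁻¹ *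
        ∑ a, algebraMap (MvPolynomial (Fin n) ℂ) (FractionRing (MvPolynomial (Fin n) ℂ))
          (M.adjugate a i) * D a x)
    (l : List (Fin n)) (hl : l ≠ []) (a : Fin n) :
    algebraMap (MvPolynomial (Fin n) ℂ) (FractionRing (MvPolynomial (Fin n) ℂ)) M.det
        ^ (2 * l.length - 1) *
      l.foldr (fun i acc => Dy i acc)
        (algebraMap (MvPolynomial (Fin n) ℂ) (FractionRing (MvPolynomial (Fin n) ℂ)) (X a))
      ∈ Set.range (algebraMap (MvPolynomial (Fin n) ℂ)
          (FractionRing (MvPolynomial (Fin n) ℂ))) := by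
  set φ := algebraMap (MvPolynomial (Fin n) ℂ) (FractionRing (MvPolynomial (Fin n) ℂ)) with hφ
  have hJ0 : φ M.det ≠ 0 := by
    rw [hφ]
    simpa using hJ
  have cancel : ∀ i x (k : ℕ), φ M.det ^ (k + 1) * Dy i x =
      ∑ b, φ (M.adjugate b i) * (φ M.det ^ k * D b x) := by
    intro i x k
    rw [hDy, pow_succ, mul_assoc, mul_inv_cancel_left₀ hJ0, Finset.mul_sum]
    exact Finset.sum_congr rfl fun b _ => by ring
  change _ ∈ φ.range
  induction l with
  | nil => exact absurd rfl hl
  | cons i t ih =>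
    rw [List.foldr_cons]
    rcases eq_or_ne t [] with rfl | ht
    · simp only [List.length_singleton, List.foldr_nil]
      rw [show 2 * 1 - 1 = 0 + 1 from rfl, cancel]
      refine sum_mem fun b _ => mul_mem ⟨_, rfl⟩ ?_
      rw [hD, pow_zero, one_mul]
      exact ⟨_, rfl⟩
    · have hlen : 2 * (i :: t).length - 1 = (2 * t.length - 1 + 1) + 1 := by
        have := List.length_pos_iff.mpr ht
        rw [List.length_cons]
        omega
      rw [hlen, cancel]
      exact sum_mem fun b _ => mul_mem ⟨_, rfl⟩
        (pow_succ_mul_derivation_mem_range φ (D b) (pderiv b) (hD b) M.det _ _ (ih ht))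
end

section
/- Let n, p ≥ 1, let G be a finite subgroup of GL(n, ℂ), and let K be a subgroup of G. Let V^K := {v ∈ ℂⁿ : k · v = v for all k ∈ K} be the subspace of fixed points of K. Let F : ℂ[u₁,…,uₙ] → ℂ[[X₁,…,X_p]] be a ℂ-algebra homomorphism such that F(P) = 0 for every polynomial P that vanishes at every point of the union ⋃_{g ∈ G} g · V^K. Then there exists g ∈ G such that F(P) = 0 for every polynomial P that vanishes at every point of g · V^K. -/
open MvPolynomial

theorem stmt4 (n p : ℕ) (hn : 1 ≤ n) (hp : 1 ≤ p)
    (G : Subgroup (GL (Fin n) ℂ)) (hGfin : (G : Set (GL (Fin n) ℂ)).Finite)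
    (K : Subgroup (GL (Fin n) ℂ)) (hKG : K ≤ G)
    (VK : Set (Fin n → ℂ))
    (hVK : VK = {v : Fin n → ℂ |
      ∀ k ∈ K, Matrix.mulVec ((k : GL (Fin n) ℂ) : Matrix (Fin n) (Fin n) ℂ) v = v})
    (F : MvPolynomial (Fin n) ℂ →ₐ[ℂ] MvPowerSeries (Fin p) ℂ)
    (hF : ∀ P : MvPolynomial (Fin n) ℂ,
      (∀ g ∈ G, ∀ v ∈ VK,
        eval (Matrix.mulVec ((g : GL (Fin n) ℂ) : Matrix (Fin n) (Fin n) ℂ) v) P = 0) →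
      F P = 0) :
    ∃ g ∈ G, ∀ P : MvPolynomial (Fin n) ℂ,
      (∀ v ∈ VK,
        eval (Matrix.mulVec ((g : GL (Fin n) ℂ) : Matrix (Fin n) (Fin n) ℂ) v) P = 0) →
      F P = 0 := by
  -- If every `g` had a witness `P g` vanishing on `g · V^K` with `F (P g) ≠ 0`, the product of the
  -- `P g` over the finite group `G` would vanish on the whole union, while its image under `F` is
  -- a product of nonzero elements of the domain of formal power series.
  by_contra! h
  choose! P hP hFP using h
  have h0 : F (∏ g ∈ hGfin.toFinset, P g) = 0 := by
    refine hF _ fun g hg v hv => ?_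
    rw [map_prod]
    exact Finset.prod_eq_zero (hGfin.mem_toFinset.2 hg) (hP g hg v hv)
  rw [map_prod, Finset.prod_eq_zero_iff] at h0
  obtain ⟨g, hg, hg0⟩ := h0
  exact hFP g (hGfin.mem_toFinset.1 hg) hg0
end

section
/- Let n ≥ 1 and let G be a finite subgroup of GL(n, ℂ). Then for each i ∈ {1,…,n} there exist an integer N ≥ 1 and G-invariant polynomials a₁,…,a_N ∈ ℂ[u₁,…,uₙ], where for each j the polynomial a_j is either zero or homogeneous of degree j and has zero constant coefficient, such that uᵢ^N + Σ_{j=1}^N a_j · uᵢ^{N−j} = 0 in ℂ[u₁,…,uₙ]. -/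
/-!
The product `∏_{g ∈ G} (x - g • uᵢ)` vanishes at `x = uᵢ`, because of the factor `g = 1`.
By Vieta its coefficient at `x ^ (|G| - k)` is the `k`-th elementary symmetric polynomial
evaluated at the family `(-(g • uᵢ))_{g ∈ G}`. It is homogeneous of degree `k` since every
`g • uᵢ` is a linear form, and it is `G`-invariant since `h ∈ G` permutes the family by
left translation (`glAct_glAct_X`).
-/

open MvPolynomial

theorem glAct_one_X {n : ℕ} (i : Fin n) : glAct 1 (X i) = (X i : MvPolynomial (Fin n) ℂ) := by
  simp [glAct, Matrix.one_apply]

/-- `g ↦ glAct g` is multiplicative on coordinate functions, as a left action should be. -/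
theorem glAct_glAct_X {n : ℕ} (h g : GL (Fin n) ℂ) (i : Fin n) :
    glAct h (glAct g (X i)) = glAct (h * g) (X i) := by
  simp only [glAct, aeval_X, map_sum, map_mul, algHom_C, algebraMap_eq, mul_inv_rev,
    Units.val_mul, Matrix.mul_apply, Finset.sum_mul, Finset.mul_sum]
  rw [Finset.sum_comm]
  simp only [mul_assoc]

theorem glAct_X_isHomogeneous {n : ℕ} (g : GL (Fin n) ℂ) (i : Fin n) :
    (glAct g (X i)).IsHomogeneous 1 := by
  simp only [glAct, aeval_X]
  exact IsHomogeneous.sum _ _ _ fun j _ => isHomogeneous_C_mul_X _ _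

theorem isHomogeneous_esymm (σ R : Type*) [Fintype σ] [CommSemiring R] (k : ℕ) :
    (esymm σ R k).IsHomogeneous k := by
  refine IsHomogeneous.sum _ _ _ fun t ht => ?_
  have := IsHomogeneous.prod t (fun j => (X j : MvPolynomial σ R)) (fun _ => 1)
    fun j _ => isHomogeneous_X R j
  simpa [(Finset.mem_powersetCard.mp ht).2] using this

/-- The family `(-(g • uᵢ))_{g ∈ G}`, whose elementary symmetric functions are the coefficients
of `∏_{g ∈ G} (x - g • uᵢ)`. -/
noncomputable def negOrbit {n : ℕ} (G : Subgroup (GL (Fin n) ℂ)) (i : Fin n) (g : G) :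
    MvPolynomial (Fin n) ℂ :=
  -glAct (g : GL (Fin n) ℂ) (X i)

theorem glAct_aeval_negOrbit_esymm {n : ℕ} (G : Subgroup (GL (Fin n) ℂ)) [Fintype G]
    (i : Fin n) (k : ℕ) (h : G) :
    glAct (h : GL (Fin n) ℂ) (aeval (negOrbit G i) (esymm G ℂ k)) =
      aeval (negOrbit G i) (esymm G ℂ k) := by
  have key : (glAct (h : GL (Fin n) ℂ)).comp (aeval (negOrbit G i)) =
      (aeval (negOrbit G i)).comp (rename (Equiv.mulLeft h)) := by
    ext1 g
    simp [negOrbit, glAct_glAct_X]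
  have := DFunLike.congr_fun key (esymm G ℂ k)
  rwa [AlgHom.comp_apply, AlgHom.comp_apply, rename_esymm] at this

theorem sum_aeval_negOrbit_esymm {n : ℕ} (G : Subgroup (GL (Fin n) ℂ)) [Fintype G]
    (i : Fin n) :
    ∑ k ∈ Finset.range (Fintype.card G + 1),
      aeval (negOrbit G i) (esymm G ℂ k) * X i ^ (Fintype.card G - k) = 0 := by
  have hv := congrArg (Polynomial.eval₂ (aeval (negOrbit G i)).toRingHom (X i))
    (MvPolynomial.prod_C_add_X_eq_sum_esymm ℂ G)
  simp only [Polynomial.eval₂_finsetProd, Polynomial.eval₂_finsetSum, Polynomial.eval₂_add,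
    Polynomial.eval₂_mul, Polynomial.eval₂_X, Polynomial.eval₂_C, Polynomial.eval₂_X_pow] at hv
  refine hv.symm.trans (Finset.prod_eq_zero (Finset.mem_univ (1 : G)) ?_)
  simp [negOrbit, glAct_one_X]

theorem stmt7 (n : ℕ) (hn : 1 ≤ n)
    (G : Subgroup (GL (Fin n) ℂ)) (hGfin : (G : Set (GL (Fin n) ℂ)).Finite)
    (i : Fin n) :
    ∃ N : ℕ, 1 ≤ N ∧ ∃ a : Fin N → MvPolynomial (Fin n) ℂ,
      (∀ j : Fin N,
        (∀ g ∈ G, glAct g (a j) = a j) ∧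
        (a j = 0 ∨ (a j).IsHomogeneous ((j : ℕ) + 1)) ∧
        coeff 0 (a j) = 0) ∧
      X i ^ N + ∑ j : Fin N, a j * X i ^ (N - ((j : ℕ) + 1)) = 0 := by
  have : Finite G := hGfin
  have := Fintype.ofFinite G
  have hom (k : ℕ) : (aeval (negOrbit G i) (esymm G ℂ k)).IsHomogeneous k := by
    simpa using (isHomogeneous_esymm G ℂ k).aeval (negOrbit G i)
      fun g => (glAct_X_isHomogeneous (g : GL (Fin n) ℂ) i).neg
  refine ⟨Fintype.card G, Fintype.card_pos,
    fun j => aeval (negOrbit G i) (esymm G ℂ ((j : ℕ) + 1)), fun j => ⟨fun g hg => ?_, ?_, ?_⟩, ?_⟩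
  · exact glAct_aeval_negOrbit_esymm G i _ ⟨g, hg⟩
  · exact Or.inr (hom _)
  · exact (hom _).coeff_eq_zero (by simp)
  · have hs := sum_aeval_negOrbit_esymm G i
    rw [Finset.sum_range_succ', add_comm, ← Fin.sum_univ_eq_sum_range
      (fun k => aeval (negOrbit G i) (esymm G ℂ (k + 1)) * X i ^ (Fintype.card G - (k + 1)))] at hs
    simpa using hs
end
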